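/- Let D ⊆ ℝ^{n+1} be a convex set, p ∈ ∂D, and suppose L₁, L₂ are two lines through p each of which is locally contained in ∂D near p. Then the 2-dimensional affine plane spanned by L₁ and L₂ is locally contained in ∂D near p. -/

import Mathlib

open Set Topology

/-- If two affine subspaces through `p` both lie in a convex set near `p`, so does their span. -/
theorem Convex.eventually_mem_sup_of_eventually_mem {E : Type*} [NormedAddCommGroup E]
    [NormedSpace ℝ E] [FiniteDimensional ℝ E] {C : Set E} (hC : Convex ℝ C) {p : E}
    {L₁ L₂ : AffineSubspace ℝ E} (hp₁ : p ∈ L₁) (hp₂ : p ∈ L₂)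
    (h₁ : ∀ᶠ x in 𝓝 p, x ∈ L₁ → x ∈ C) (h₂ : ∀ᶠ x in 𝓝 p, x ∈ L₂ → x ∈ C) :
    ∀ᶠ x in 𝓝 p, x ∈ L₁ ⊔ L₂ → x ∈ C := by
  let A := L₁.direction
  let B := L₂.direction
  let T : A × B →ₗ[ℝ] (A ⊔ B : Submodule ℝ E) :=
    (Submodule.inclusion le_sup_left).coprod (Submodule.inclusion le_sup_right)
  have hT : Function.Surjective T := by
    rintro ⟨x, hx⟩
    obtain ⟨a, ha, b, hb, rfl⟩ := Submodule.mem_sup.1 hx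
    exact ⟨(⟨a, ha⟩, ⟨b, hb⟩), Subtype.ext (by simp [T])⟩
  have hopen : IsOpenMap T := T.isOpenMap_of_finiteDimensional hT
  have ha : ∀ᶠ q : A × B in 𝓝 0, p + (2 : ℝ) • (q.1 : E) ∈ C := by
    have hc : Filter.Tendsto (fun q : A × B => p + (2 : ℝ) • (q.1 : E)) (𝓝 0) (𝓝 p) := by
      have : Continuous fun q : A × B => p + (2 : ℝ) • (q.1 : E) := by fun_prop
      simpa using this.tendsto 0
    filter_upwards [hc.eventually h₁] with q hq
    refine hq ?_
    rw [add_comm]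
    exact AffineSubspace.vadd_mem_of_mem_direction (A.smul_mem 2 q.1.2) hp₁
  have hb : ∀ᶠ q : A × B in 𝓝 0, p + (2 : ℝ) • (q.2 : E) ∈ C := by
    have hc : Filter.Tendsto (fun q : A × B => p + (2 : ℝ) • (q.2 : E)) (𝓝 0) (𝓝 p) := by
      have : Continuous fun q : A × B => p + (2 : ℝ) • (q.2 : E) := by fun_prop
      simpa using this.tendsto 0
    filter_upwards [hc.eventually h₂] with q hq
    refine hq ?_
    rw [add_comm]
    exact AffineSubspace.vadd_mem_of_mem_direction (B.smul_mem 2 q.2.2) hp₂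
  have hsum : ∀ᶠ v : (A ⊔ B : Submodule ℝ E) in 𝓝 0, p + (v : E) ∈ C := by
    have himg := hopen.image_mem_nhds (ha.and hb)
    rw [map_zero] at himg
    filter_upwards [himg]
    rintro _ ⟨q, ⟨hqa, hqb⟩, rfl⟩
    have hmid := hC hqa hqb (a := 1 / 2) (b := 1 / 2) (by norm_num) (by norm_num) (by norm_num)
    convert hmid using 1
    simp only [T, LinearMap.coprod_apply, Submodule.coe_add, Submodule.coe_inclusion]
    module
  have hsum' : ∀ᶠ v : E in 𝓝 0, v ∈ A ⊔ B → p + v ∈ C := by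
    obtain ⟨U, hU, hUC⟩ := mem_nhds_subtype _ _ _ |>.1 hsum
    filter_upwards [hU] with v hv hvAB
    exact hUC (a := ⟨v, hvAB⟩) hv
  have hc : Filter.Tendsto (fun x : E => x - p) (𝓝 p) (𝓝 0) := by
    have : Continuous fun x : E => x - p := by fun_prop
    simpa using this.tendsto p
  filter_upwards [hc.eventually hsum'] with x hx hxL
  have hdir : x - p ∈ A ⊔ B := by
    have := AffineSubspace.vsub_mem_direction hxL (le_sup_left (a := L₁) (b := L₂) hp₁)
    rwa [AffineSubspace.direction_sup_eq_sup_direction hp₁ hp₂] at this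
  simpa using hx hdir

/-- If two affine subspaces through a frontier point `p` of a convex set both lie in the frontier
near `p`, so does their span. -/
theorem Convex.eventually_mem_frontier_sup {E : Type*} [NormedAddCommGroup E]
    [NormedSpace ℝ E] [FiniteDimensional ℝ E] {D : Set E} (hD : Convex ℝ D) {p : E}
    (hp : p ∈ frontier D) {L₁ L₂ : AffineSubspace ℝ E} (hp₁ : p ∈ L₁) (hp₂ : p ∈ L₂)
    (h₁ : ∀ᶠ x in 𝓝 p, x ∈ L₁ → x ∈ frontier D) (h₂ : ∀ᶠ x in 𝓝 p, x ∈ L₂ → x ∈ frontier D) :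
    ∀ᶠ x in 𝓝 p, x ∈ L₁ ⊔ L₂ → x ∈ frontier D := by
  have hmem := hD.closure.eventually_mem_sup_of_eventually_mem hp₁ hp₂
    (h₁.mono fun x hx hxL => frontier_subset_closure (hx hxL))
    (h₂.mono fun x hx hxL => frontier_subset_closure (hx hxL))
  have hc : Filter.Tendsto (AffineEquiv.pointReflection ℝ p) (𝓝 p) (𝓝 p) := by
    have : Continuous fun x : E => p - x + p := by fun_prop
    exact this.tendsto' p p (by simp)
  filter_upwards [hmem, hc.eventually hmem] with x hx hx' hxL
  refine ⟨hx hxL, fun hxint => hp.2 ?_⟩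
  have hpL : p ∈ L₁ ⊔ L₂ := le_sup_left (a := L₁) (b := L₂) hp₁
  have hr : AffineEquiv.pointReflection ℝ p x ∈ L₁ ⊔ L₂ :=
    AffineSubspace.vadd_mem_of_mem_direction (AffineSubspace.vsub_mem_direction hpL hxL) hpL
  have := hD.combo_interior_closure_mem_interior hxint (hx' hr) (a := 1 / 2) (b := 1 / 2)
    (by norm_num) (by norm_num) (by norm_num)
  convert this using 1
  simp only [AffineEquiv.pointReflection_apply, vsub_eq_sub, vadd_eq_add]
  module

/-- If two distinct lines through a boundary point p of a convex set
D ⊆ ℝ^{n+1} are each locally contained in ∂D near p, then the affine 2-plane they span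
is locally contained in ∂D near p. -/
theorem stmt_3 (n : ℕ) (D : Set (EuclideanSpace ℝ (Fin (n + 1))))
    (hD : Convex ℝ D) (hint : (interior D).Nonempty)
    (p : EuclideanSpace ℝ (Fin (n + 1))) (hp : p ∈ frontier D)
    (L₁ L₂ : AffineSubspace ℝ (EuclideanSpace ℝ (Fin (n + 1))))
    (hL₁dim : Module.finrank ℝ L₁.direction = 1)
    (hL₂dim : Module.finrank ℝ L₂.direction = 1)
    (hpL₁ : p ∈ L₁) (hpL₂ : p ∈ L₂) (hne : L₁ ≠ L₂)
    (hloc₁ : ∃ U ∈ nhds p, (L₁ : Set (EuclideanSpace ℝ (Fin (n + 1)))) ∩ U ⊆ frontier D)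
    (hloc₂ : ∃ U ∈ nhds p, (L₂ : Set (EuclideanSpace ℝ (Fin (n + 1)))) ∩ U ⊆ frontier D) :
    ∃ U ∈ nhds p,
      (affineSpan ℝ ((L₁ : Set (EuclideanSpace ℝ (Fin (n + 1)))) ∪ L₂) :
        Set (EuclideanSpace ℝ (Fin (n + 1)))) ∩ U ⊆ frontier D := by
  obtain ⟨U₁, hU₁, h₁⟩ := hloc₁
  obtain ⟨U₂, hU₂, h₂⟩ := hloc₂
  have h := hD.eventually_mem_frontier_sup hp hpL₁ hpL₂
    (Filter.mem_of_superset hU₁ fun x hx hxL => h₁ ⟨hxL, hx⟩)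
    (Filter.mem_of_superset hU₂ fun x hx hxL => h₂ ⟨hxL, hx⟩)
  refine ⟨_, h, fun x hx => hx.2 ?_⟩
  have hxs := hx.1
  rwa [AffineSubspace.span_union, AffineSubspace.affineSpan_coe,
    AffineSubspace.affineSpan_coe] at hxs
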